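/- arXiv:2211.09666 — 2 statements merged into one kernel-verified Lean document; each statement's English description precedes it below -/
import Mathlib

section
/- For integers n ≥ 2 and k ≥ 1, the path P_n on n vertices is k-distance magic if and only if k = 1 and n = 3. -/
/-!
In `P_n` with vertices `0, …, n - 1` we have `d(u, v) = |u - v|`, so the vertices at distance `k`
from `u` are those of `u - k`, `u + k` that lie in the range. Let `f` be a `k`-distance magic
labeling with magic constant `M`; some pair is at distance `k`, so `k < n`. Vertex `0` gives
`f k = M`.
* If `n = k + 1`, vertex `k` gives `f 0 = M = f k`, against injectivity.
* If `k ≥ 2` and `k + 1 < n`, vertex `1` gives `f (k + 1) = M = f k`, against injectivity.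
* If `k = 1` and `n ≥ 4`, vertex `2` gives `f 1 + f 3 = M = f 1`, against positivity of labels.

The only case left is `k = 1`, `n = 3`, where the labels `1, 3, 2` work.
-/

open SimpleGraph Finset

/-- The set of vertices at distance exactly `k` from `u` in `G` (vertices in other
connected components are at distance `0` in `SimpleGraph.dist`, hence for `k ≥ 1` they
never belong to this set). -/
noncomputable def boundaryN {V : Type*} [Fintype V] (G : SimpleGraph V) (k : ℕ) (u : V) :
    Finset V := by
  classical exact Finset.univ.filter (fun v => G.dist u v = k)

/-- `f` is a `k`-distance magic labeling of `G`: a bijection from the vertex set onto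
`{1, …, |V|}` such that the sum of labels over `∂N_k(u)` is the same for every vertex `u`
with `∂N_k(u) ≠ ∅`. -/
def IsKDML {V : Type*} [Fintype V] (G : SimpleGraph V) (k : ℕ) (f : V → ℕ) : Prop :=
  Set.BijOn f Set.univ (Set.Icc 1 (Fintype.card V)) ∧
  ∃ M : ℕ, ∀ u : V, (boundaryN G k u).Nonempty → ∑ w ∈ boundaryN G k u, f w = M

/-- `G` is `k`-distance magic: some pair of vertices is at distance exactly `k`, and `G`
admits a `k`-distance magic labeling. -/
def IsKDM {V : Type*} [Fintype V] (G : SimpleGraph V) (k : ℕ) : Prop :=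
  (∃ u v : V, G.dist u v = k) ∧ ∃ f : V → ℕ, IsKDML G k f

lemma le_length_of_pathGraph_walk {n : ℕ} {u v : Fin n} (p : (pathGraph n).Walk u v) :
    u.val ≤ v.val + p.length ∧ v.val ≤ u.val + p.length := by
  induction p with
  | nil => simp
  | cons h p ih =>
    rw [pathGraph_adj] at h
    rw [Walk.length_cons]
    omega

lemma exists_pathGraph_walk {n : ℕ} (d : ℕ) (u v : Fin n) (h : u.val + d = v.val) :
    ∃ p : (pathGraph n).Walk u v, p.length = d := by
  induction d generalizing u with
  | zero =>
    obtain rfl : u = v := Fin.ext (by omega)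
    exact ⟨Walk.nil, rfl⟩
  | succ d ih =>
    obtain ⟨p, hp⟩ := ih ⟨u.val + 1, by omega⟩ (by simp only; omega)
    exact ⟨Walk.cons (pathGraph_adj.2 (Or.inl rfl)) p, by simp [hp]⟩

lemma pathGraph_dist_of_add_eq {n d : ℕ} {u v : Fin n} (h : u.val + d = v.val) :
    (pathGraph n).dist u v = d := by
  obtain ⟨p, hp⟩ := exists_pathGraph_walk d u v h
  obtain ⟨q, hq⟩ := (pathGraph_preconnected n u v).exists_walk_length_eq_dist
  have h₁ := dist_le p
  have h₂ := le_length_of_pathGraph_walk q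
  omega

lemma pathGraph_dist_eq_iff {n k : ℕ} {u v : Fin n} :
    (pathGraph n).dist u v = k ↔ u.val + k = v.val ∨ v.val + k = u.val := by
  constructor
  · rintro rfl
    rcases le_total u.val v.val with h | h
    · left
      rw [pathGraph_dist_of_add_eq (Nat.add_sub_of_le h)]
      omega
    · right
      rw [dist_comm, pathGraph_dist_of_add_eq (Nat.add_sub_of_le h)]
      omega
  · rintro (h | h)
    · exact pathGraph_dist_of_add_eq h
    · rw [dist_comm]
      exact pathGraph_dist_of_add_eq h

lemma mem_boundaryN_pathGraph {n k : ℕ} {u v : Fin n} :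
    v ∈ boundaryN (pathGraph n) k u ↔ u.val + k = v.val ∨ v.val + k = u.val := by
  simp [boundaryN, pathGraph_dist_eq_iff]

theorem stmt1 (n k : ℕ) (hn : 2 ≤ n) (hk : 1 ≤ k) :
    IsKDM (SimpleGraph.pathGraph n) k ↔ k = 1 ∧ n = 3 := by
  constructor
  · rintro ⟨⟨a, b, hab⟩, f, hf, M, hM⟩
    rw [pathGraph_dist_eq_iff] at hab
    have hkn : k < n := by omega
    have hinj {i j : Fin n} (h : f i = f j) : i.val = j.val :=
      congrArg Fin.val (hf.injOn (Set.mem_univ i) (Set.mem_univ j) h)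
    have hone (u w : Fin n) (h : ∀ v : Fin n, u.val + k = v.val ∨ v.val + k = u.val ↔ v = w) :
        f w = M := by
      have hb : boundaryN (pathGraph n) k u = {w} := by
        ext v
        rw [mem_boundaryN_pathGraph, h, mem_singleton]
      simpa [hb] using hM u
    have h₀ : f ⟨k, hkn⟩ = M := hone ⟨0, by omega⟩ _ fun v => by
      simp only [Fin.ext_iff]
      omega
    by_cases hlast : n = k + 1
    · have h₁ : f ⟨0, by omega⟩ = M := hone ⟨k, hkn⟩ _ fun v => by
        simp only [Fin.ext_iff]
        omega
      have := hinj (h₀.trans h₁.symm)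
      simp only at this
      omega
    by_cases hk2 : 2 ≤ k
    · have h₁ : f ⟨k + 1, by omega⟩ = M := hone ⟨1, by omega⟩ _ fun v => by
        simp only [Fin.ext_iff]
        omega
      have := hinj (h₀.trans h₁.symm)
      simp only at this
      omega
    obtain rfl : k = 1 := by omega
    refine ⟨rfl, ?_⟩
    by_contra hn3
    have hb : boundaryN (pathGraph n) 1 ⟨2, by omega⟩ = {⟨1, hkn⟩, ⟨3, by omega⟩} := by
      ext v
      simp only [mem_boundaryN_pathGraph, mem_insert, mem_singleton, Fin.ext_iff]
      omega
    have h₂ := hM ⟨2, by omega⟩ (by simp [hb])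
    rw [hb, sum_pair (by simp)] at h₂
    have h₃ := (hf.mapsTo (Set.mem_univ (⟨3, by omega⟩ : Fin n))).1
    omega
  · rintro ⟨rfl, rfl⟩
    refine ⟨⟨0, 1, pathGraph_dist_eq_iff.2 (by simp)⟩, ![1, 3, 2], ⟨?_, ?_, ?_⟩, 3, ?_⟩
    · intro i _
      fin_cases i <;> simp
    · intro i _ j _
      fin_cases i <;> fin_cases j <;> simp
    · rintro m ⟨h₁, h₂⟩
      rw [Fintype.card_fin] at h₂
      interval_cases m
      · exact ⟨0, by simp⟩
      · exact ⟨2, by simp⟩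
      · exact ⟨1, by simp⟩
    · rintro u -
      have hb : boundaryN (pathGraph 3) 1 u =
          univ.filter fun v : Fin 3 => u.val + 1 = v.val ∨ v.val + 1 = u.val := by
        ext v
        simp [mem_boundaryN_pathGraph]
      rw [hb]
      clear hb
      revert u
      decide
end

section
/- For integers k ≥ 2 and n ≥ 3, the cycle C_n is k-distance magic if and only if n = 4k. -/
/-!
Write `⊕`, `⊖` for addition and subtraction modulo `n`. The distance in `C_n` is
`min |u - v| (n - |u - v|)` (`cycle_dist`), so a pair at distance `k` exists only if `2k ≤ n`.

* If `n = 2k`, then `∂N_k(u)` is the singleton `{u ⊕ k}`, and magicness forces `f` to be constant.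
* If `2k < n`, then `∂N_k(u) = {u ⊕ k, u ⊖ k}` has two elements (`sum_boundaryN`). Magicness at
  `u ⊕ k` reads `f (u ⊕ 2k) + f u = M`, so `f (u ⊕ 4k) = f u`; since `f` is injective, `n ∣ 4k`,
  and `2k < n` leaves only `n = 4k`.

Conversely, for `n = 4k` the vertices `u ⊕ k` and `u ⊖ k` are antipodal, so any labeling in which
antipodal labels sum to `4k + 1` is magic; take `1, …, 2k, 4k, …, 2k + 1` in cyclic order.
-/

open SimpleGraph Finset

theorem cycle_adj_iff {n : ℕ} (hn : 3 ≤ n) (u v : Fin n) :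
    (cycleGraph n).Adj u v ↔ u.val + 1 = v.val ∨ v.val + 1 = u.val ∨
      (u.val = 0 ∧ v.val + 1 = n) ∨ (v.val = 0 ∧ u.val + 1 = n) := by
  have hu := u.isLt
  have hv := v.isLt
  rw [cycleGraph_adj']
  rcases le_total u v with h | h
  · have h1 := Fin.sub_val_of_le h
    have h' : u.val ≤ v.val := h
    rcases h.lt_or_eq with h2 | h2
    · have h3 := Fin.coe_sub_iff_lt.2 h2
      omega
    · subst h2
      omega
  · have h1 := Fin.sub_val_of_le h
    have h' : v.val ≤ u.val := h
    rcases h.lt_or_eq with h2 | h2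
    · have h3 := Fin.coe_sub_iff_lt.2 h2
      omega
    · subst h2
      omega

/-- Lower bound on distances: the cyclic distance changes by at most one along an edge. -/
theorem cycle_walk_length {n : ℕ} (hn : 3 ≤ n) {u v : Fin n} (w : (cycleGraph n).Walk u v) :
    min (max (u.val - v.val) (v.val - u.val)) (n - max (u.val - v.val) (v.val - u.val))
      ≤ w.length := by
  induction w with
  | nil => simp
  | @cons a b c h p ih =>
    rw [cycle_adj_iff hn] at h
    rw [Walk.length_cons]
    have := a.isLt
    have := b.isLt
    have := c.isLt
    omega

theorem cycle_connected {n : ℕ} (hn : 3 ≤ n) : (cycleGraph n).Connected := by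
  obtain ⟨m, rfl⟩ : ∃ m, n = m + 1 := ⟨n - 1, by omega⟩
  exact cycleGraph_connected

/-- Upper bound on distances along the arc that avoids the edge between `n - 1` and `0`. -/
theorem cycle_dist_le {n : ℕ} (hn : 3 ≤ n) (u : Fin n) (d : ℕ) (h : u.val + d < n) :
    (cycleGraph n).dist u ⟨u.val + d, h⟩ ≤ d := by
  induction d with
  | zero => simp
  | succ d ih =>
    have h1 := ih (by omega)
    have h2 : (cycleGraph n).dist ⟨u.val + d, by omega⟩ ⟨u.val + (d + 1), h⟩ = 1 := by
      rw [dist_eq_one_iff_adj, cycle_adj_iff hn]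
      left
      simp only
      omega
    have h3 := (cycle_connected hn).dist_triangle (u := u) (v := ⟨u.val + d, by omega⟩)
      (w := ⟨u.val + (d + 1), h⟩)
    omega

theorem cycle_dist_of_le {n : ℕ} (hn : 3 ≤ n) (u v : Fin n) (huv : u.val ≤ v.val) :
    (cycleGraph n).dist u v = min (v.val - u.val) (n - (v.val - u.val)) := by
  have hc := cycle_connected hn
  have hv := v.isLt
  have key : ∀ a b : Fin n, a.val ≤ b.val → (cycleGraph n).dist a b ≤ b.val - a.val := by
    intro a b hab
    have hb := b.isLt
    have h := cycle_dist_le hn a (b.val - a.val) (by omega)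
    have e : (⟨a.val + (b.val - a.val), by omega⟩ : Fin n) = b := by
      ext
      simp only
      omega
    rwa [e] at h
  have h1 := key u v huv
  -- The complementary arc runs from `u` down to `0`, across to `n - 1`, and down to `v`.
  have h2 := key ⟨0, by omega⟩ u (by simp)
  have h3 := key v ⟨n - 1, by omega⟩ (by simp only; omega)
  have h4 : (cycleGraph n).dist ⟨0, by omega⟩ ⟨n - 1, by omega⟩ = 1 := by
    rw [dist_eq_one_iff_adj, cycle_adj_iff hn]
    refine .inr (.inr (.inl ⟨rfl, ?_⟩))
    simp only
    omega
  have t1 := hc.dist_triangle (u := u) (v := ⟨0, by omega⟩) (w := v)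
  have t2 := hc.dist_triangle (u := ⟨0, by omega⟩) (v := ⟨n - 1, by omega⟩) (w := v)
  rw [dist_comm (u := u) (v := ⟨0, _⟩)] at t1
  rw [dist_comm (u := ⟨n - 1, _⟩) (v := v)] at t2
  simp only at h2 h3
  obtain ⟨w, hw⟩ := hc.exists_walk_length_eq_dist u v
  have h5 := cycle_walk_length hn w
  omega

theorem cycle_dist {n : ℕ} (hn : 3 ≤ n) (u v : Fin n) :
    (cycleGraph n).dist u v = min (max (u.val - v.val) (v.val - u.val))
      (n - max (u.val - v.val) (v.val - u.val)) := by
  rcases le_total u.val v.val with h | h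
  · rw [cycle_dist_of_le hn u v h]
    omega
  · rw [dist_comm, cycle_dist_of_le hn v u h]
    omega

/-- Rotation of the cycle by `k` steps, `u ↦ u + k mod n`, for `k ≤ n`. -/
def rotUp {n k : ℕ} (hk : k ≤ n) (u : Fin n) : Fin n :=
  ⟨if u.val + k < n then u.val + k else u.val + k - n, by have := u.isLt; split <;> omega⟩

/-- Rotation of the cycle by `-k` steps, `u ↦ u - k mod n`, for `0 < k ≤ n`. -/
def rotDown {n k : ℕ} (hk : k ≤ n) (hk0 : 0 < k) (u : Fin n) : Fin n :=
  ⟨if k ≤ u.val then u.val - k else u.val + n - k, by have := u.isLt; split <;> omega⟩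

theorem mem_boundaryN {n : ℕ} (k : ℕ) (u v : Fin n) :
    v ∈ boundaryN (cycleGraph n) k u ↔ (cycleGraph n).dist u v = k := by
  simp [boundaryN]

theorem boundaryN_eq {n k : ℕ} (hn : 3 ≤ n) (hk0 : 0 < k) (hk : 2 * k ≤ n) (u : Fin n) :
    boundaryN (cycleGraph n) k u =
      {rotUp (k := k) (by omega) u, rotDown (k := k) (by omega) hk0 u} := by
  ext v
  have := u.isLt
  have := v.isLt
  rw [mem_boundaryN, cycle_dist hn]
  simp only [Finset.mem_insert, Finset.mem_singleton, Fin.ext_iff, rotUp, rotDown]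
  split <;> split <;> omega

theorem sum_boundaryN {n k : ℕ} (hn : 3 ≤ n) (hk0 : 0 < k) (hk : 2 * k < n) (u : Fin n)
    (f : Fin n → ℕ) :
    ∑ w ∈ boundaryN (cycleGraph n) k u, f w =
      f (rotUp (k := k) (by omega) u) + f (rotDown (k := k) (by omega) hk0 u) := by
  rw [boundaryN_eq hn hk0 hk.le, Finset.sum_pair]
  have := u.isLt
  simp only [ne_eq, Fin.ext_iff, rotUp, rotDown]
  split <;> split <;> omega

theorem eq_of_isKDM {k n : ℕ} (hk0 : 0 < k) (hn : 3 ≤ n) (h : IsKDM (cycleGraph n) k) :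
    n = 4 * k := by
  obtain ⟨⟨a, b, hab⟩, f, hf, M, hM⟩ := h
  have hinj : Function.Injective f := Set.injOn_univ.1 hf.injOn
  rw [cycle_dist hn] at hab
  have h2k : 2 * k ≤ n := by omega
  have hk : k ≤ n := by omega
  have hM' : ∀ u, ∑ w ∈ boundaryN (cycleGraph n) k u, f w = M := fun u =>
    hM u (by rw [boundaryN_eq hn hk0 h2k]; simp)
  rcases h2k.lt_or_eq with h | h
  · have h2 : ∀ u, f (rotUp hk (rotUp hk u)) + f u = M := by
      intro u
      have h3 := hM' (rotUp hk u)
      rw [sum_boundaryN hn hk0 h] at h3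
      have e : rotDown hk hk0 (rotUp hk u) = u := by
        have := u.isLt
        simp only [Fin.ext_iff, rotUp, rotDown]
        grind
      rwa [e] at h3
    have h4 := h2 ⟨0, by omega⟩
    have h5 := h2 (rotUp hk (rotUp hk ⟨0, by omega⟩))
    have h6 := hinj (show f (rotUp hk (rotUp hk (rotUp hk (rotUp hk ⟨0, by omega⟩)))) =
      f ⟨0, by omega⟩ by omega)
    simp only [Fin.ext_iff, rotUp] at h6
    grind
  · -- Antipodal case: `u ⊕ k = u ⊖ k`, so each sum is a single label.
    have h2 : ∀ u, f (rotUp hk u) = M := by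
      intro u
      have h3 := hM' u
      rw [boundaryN_eq hn hk0 h2k] at h3
      have e : rotDown hk hk0 u = rotUp hk u := by
        have := u.isLt
        simp only [Fin.ext_iff, rotUp, rotDown]
        split <;> split <;> omega
      rw [e] at h3
      simpa using h3
    have h3 := hinj ((h2 ⟨0, by omega⟩).trans (h2 ⟨1, by omega⟩).symm)
    simp only [Fin.ext_iff, rotUp] at h3
    grind

theorem isKDM_four_mul {k : ℕ} (hk : 0 < k) : IsKDM (cycleGraph (4 * k)) k := by
  have hn : 3 ≤ 4 * k := by omega
  refine ⟨⟨⟨0, by omega⟩, ⟨k, by omega⟩, ?_⟩,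
    fun u => if u.val < 2 * k then u.val + 1 else 6 * k - u.val, ⟨?_, ?_, ?_⟩, 4 * k + 1, ?_⟩
  · rw [cycle_dist hn]
    simp only
    omega
  · intro u _
    have := u.isLt
    simp only [Fintype.card_fin, Set.mem_Icc]
    split <;> omega
  · intro u _ v _ h
    have := u.isLt
    have := v.isLt
    ext
    simp only at h
    split at h <;> split at h <;> omega
  · intro y hy
    simp only [Fintype.card_fin, Set.mem_Icc] at hy
    by_cases h : y ≤ 2 * k
    · refine ⟨⟨y - 1, by omega⟩, Set.mem_univ _, ?_⟩
      simp only
      split <;> omega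
    · refine ⟨⟨6 * k - y, by omega⟩, Set.mem_univ _, ?_⟩
      simp only
      split <;> omega
  · intro u _
    rw [sum_boundaryN hn hk (by omega)]
    have := u.isLt
    simp only [rotUp, rotDown]
    grind

theorem stmt5 (k n : ℕ) (hk : 2 ≤ k) (hn : 3 ≤ n) :
    IsKDM (SimpleGraph.cycleGraph n) k ↔ n = 4 * k := by
  refine ⟨eq_of_isKDM (by omega) hn, ?_⟩
  rintro rfl
  exact isKDM_four_mul (by omega)
end
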